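/- Under Jacod's density hypothesis and the noisy-barrier setup, for every t ≥ 0 one has, P-almost surely, E_P[1_{τ > t} | F^I_t] = S^I_t(L_t), where S^I_t(x) := ( ∫_ℝ 1_{X*_t > l} p_t(l) q_t(x − l) P^L(dl) ) / ( ∫_ℝ p_t(l) q_t(x − l) P^L(dl) ), and the denominator evaluated at x = L_t is P-a.s. strictly positive. (Consequence of Proposition 5.1: the explicit form of the insider's Azéma supermartingale S^I_t = E_P[1_{τ>t} | F^I_t].) -/

import Mathlib

open MeasureTheory ProbabilityTheory Set
open scoped NNReal Classical

noncomputable section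

/-- Running infimum `X*_t = inf_{s ≤ t} X_s` of the process `X` over the time interval
`[0, t]`. -/
def runInf {Ω : Type*} (X : ℝ≥0 → Ω → ℝ) (t : ℝ≥0) (ω : Ω) : ℝ :=
  ⨅ s : Set.Icc (0 : ℝ≥0) t, X s.1 ω

/-- The insider's default-free σ-algebra `F^I_t = F_t ∨ σ(L_s = L + ε_s : s ≤ t)`. -/
def insiderSigma {Ω : Type*} [m0 : MeasurableSpace Ω] (F : Filtration ℝ≥0 m0)
    (L : Ω → ℝ) (ε : ℝ≥0 → Ω → ℝ) (t : ℝ≥0) : MeasurableSpace Ω :=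
  F t ⊔ ⨆ s ∈ Set.Iic t, MeasurableSpace.comap (fun ω => L ω + ε s ω) inferInstance

/-! The past noise increments `ε_s − ε_t`, `s ≤ t`, are independent of `(F_t, L, ε_t)`, and together
with `L_t` they generate the noisy observations, so they can be dropped from `F^I_t`, leaving
`F_t ∨ σ(L_t)`. With its first coordinate observed through `F_t` only, `((ω, L_t), L)` has density
`p_t(l) q_t(x − l)` with respect to `P ⊗ dx ⊗ P^L`: Jacod's hypothesis gives the factor `p_t`, and
the independent noise gives the factor `q_t` after the shear `(l, e) ↦ (l, l + e)`. Bayes' formula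
then reads off the conditional law of `L`. -/

open scoped ENNReal

section ProductMeasures

variable {α β γ : Type*} [MeasurableSpace α] [MeasurableSpace β] [MeasurableSpace γ]

lemma map_withDensity_comp_of_measurePreserving {μ : Measure α} {ν : Measure β} {T : α → β}
    (hT : MeasurePreserving T μ ν) {k : β → ℝ≥0∞} (hk : Measurable k) :
    (μ.withDensity (k ∘ T)).map T = ν.withDensity k := by
  ext s hs
  rw [Measure.map_apply hT.measurable hs, withDensity_apply _ (hT.measurable hs),
    withDensity_apply _ hs, ← hT.setLIntegral_comp_preimage hs hk]
  rfl

lemma measurePreserving_prod_right_comm (μ : Measure α) (ν : Measure β) (ρ : Measure γ)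
    [SFinite μ] [SFinite ν] [SFinite ρ] :
    MeasurePreserving (fun z : (α × β) × γ => ((z.1.1, z.2), z.1.2))
      ((μ.prod ν).prod ρ) ((μ.prod ρ).prod ν) :=
  (measurePreserving_prodAssoc μ ρ ν).symm.comp <|
    ((MeasurePreserving.id μ).prod Measure.measurePreserving_swap).comp <|
      measurePreserving_prodAssoc μ ν ρ

end ProductMeasures

section Bayes

variable {Ω E S : Type*} [MeasurableSpace Ω] [mE : MeasurableSpace E] [MeasurableSpace S]
  {P : Measure Ω} {ν : Measure E} {μ : Measure S} {Z : Ω → E} {L : Ω → S} {k : E × S → ℝ≥0∞}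

/-- The density of the first marginal of the measure with density `k` with respect to a product
measure whose second factor is `μ`: the normalising constant of Bayes' formula. -/
def marginalDensity (μ : Measure S) (k : E × S → ℝ≥0∞) (z : E) : ℝ≥0∞ :=
  ∫⁻ l, k (z, l) ∂μ

lemma measurable_marginalDensity [SFinite μ] (hk : Measurable k) :
    Measurable (marginalDensity μ k) :=
  hk.lintegral_prod_right'

lemma map_eq_withDensity_marginalDensity [SFinite ν] [SFinite μ] (hL : Measurable L)
    (hk : Measurable k) (hZL : P.map (fun ω => (Z ω, L ω)) = (ν.prod μ).withDensity k) :
    P.map Z = ν.withDensity (marginalDensity μ k) := by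
  rw [← Measure.fst_map_prodMk hL, hZL]
  ext s hs
  rw [Measure.fst_apply hs, withDensity_apply _ (measurable_fst hs), withDensity_apply _ hs,
    ← prod_univ, setLIntegral_prod _ hk.aemeasurable]
  simp only [Measure.restrict_univ, marginalDensity]

lemma ae_marginalDensity_ne_zero [SFinite ν] [SFinite μ] (hL : Measurable L)
    (hk : Measurable k) (hZL : P.map (fun ω => (Z ω, L ω)) = (ν.prod μ).withDensity k) :
    ∀ᵐ z ∂P.map Z, marginalDensity μ k z ≠ 0 := by
  rw [map_eq_withDensity_marginalDensity hL hk hZL,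
    ae_withDensity_iff (measurable_marginalDensity hk)]
  exact ae_of_all _ fun _ => id

lemma ae_marginalDensity_lt_top [IsFiniteMeasure P] [SFinite ν] [SFinite μ] (hL : Measurable L)
    (hk : Measurable k) (hZL : P.map (fun ω => (Z ω, L ω)) = (ν.prod μ).withDensity k) :
    ∀ᵐ z ∂ν, marginalDensity μ k z < ∞ := by
  refine ae_lt_top (measurable_marginalDensity hk) ?_
  rw [← setLIntegral_univ, ← withDensity_apply _ MeasurableSet.univ,
    ← map_eq_withDensity_marginalDensity hL hk hZL]
  exact measure_ne_top _ _

/-- The posterior law of the hidden variable given the observation `z`, for a joint density `k`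
and a reference measure `μ` on the hidden space. It vanishes where the normalising constant is
infinite. -/
def posteriorKernel (μ : Measure S) [SFinite μ] (k : E × S → ℝ≥0∞) : Kernel E S :=
  (Kernel.const E μ).withDensity fun z l => k (z, l) / marginalDensity μ k z

lemma measurable_div_marginalDensity [SFinite μ] (hk : Measurable k) :
    Measurable fun z : E × S => k z / marginalDensity μ k z.1 :=
  hk.div ((measurable_marginalDensity hk).comp measurable_fst)

lemma measurable_div_marginalDensity_left [SFinite μ] (hk : Measurable k) (z : E) :
    Measurable fun l => k (z, l) / marginalDensity μ k z :=
  (measurable_div_marginalDensity hk).comp measurable_prodMk_left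

lemma posteriorKernel_apply [SFinite μ] (hk : Measurable k) (z : E) :
    posteriorKernel μ k z = μ.withDensity fun l => k (z, l) / marginalDensity μ k z := by
  have hkD : Measurable (Function.uncurry fun z l => k (z, l) / marginalDensity μ k z) :=
    measurable_div_marginalDensity hk
  rw [posteriorKernel, Kernel.withDensity_apply _ hkD, Kernel.const_apply]

lemma isFiniteKernel_posteriorKernel [SFinite μ] (hk : Measurable k) :
    IsFiniteKernel (posteriorKernel μ k) := by
  refine ⟨1, ENNReal.one_lt_top, fun z => ?_⟩
  have hkz : Measurable fun l => k (z, l) := hk.comp measurable_prodMk_left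
  have hmass : ∫⁻ l, k (z, l) / marginalDensity μ k z ∂μ
      = marginalDensity μ k z / marginalDensity μ k z := by
    simp only [div_eq_mul_inv]
    rw [lintegral_mul_const _ hkz, marginalDensity]
  rw [posteriorKernel_apply hk, withDensity_apply _ MeasurableSet.univ, setLIntegral_univ, hmass]
  exact ENNReal.div_self_le_one

lemma ae_marginalDensity_mul_div_cancel [IsFiniteMeasure P] [SFinite ν] [SFinite μ]
    (hL : Measurable L) (hk : Measurable k)
    (hZL : P.map (fun ω => (Z ω, L ω)) = (ν.prod μ).withDensity k) :
    (fun z => marginalDensity μ k z.1 * (k z / marginalDensity μ k z.1)) =ᵐ[ν.prod μ] k := by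
  have hD := measurable_marginalDensity (μ := μ) hk
  refine (Measure.ae_prod_iff_ae_ae (measurableSet_eq_fun
    ((hD.comp measurable_fst).mul (measurable_div_marginalDensity hk)) hk)).2 ?_
  filter_upwards [ae_marginalDensity_lt_top hL hk hZL] with z hz_top
  by_cases hz : marginalDensity μ k z = 0
  · filter_upwards [(lintegral_eq_zero_iff (hk.comp measurable_prodMk_left)).1 hz] with l hl
    simpa [hz] using hl.symm
  · exact ae_of_all _ fun l => ENNReal.mul_div_cancel hz hz_top.ne

theorem condDistrib_ae_eq_posteriorKernel [StandardBorelSpace S] [Nonempty S] [IsFiniteMeasure P]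
    [SFinite ν] [SFinite μ] (hL : Measurable L) (hk : Measurable k)
    (hZL : P.map (fun ω => (Z ω, L ω)) = (ν.prod μ).withDensity k) :
    condDistrib L Z P =ᵐ[P.map Z] posteriorKernel μ k := by
  have hD := measurable_marginalDensity (μ := μ) hk
  have hkD := measurable_div_marginalDensity (μ := μ) hk
  have h_finite := isFiniteKernel_posteriorKernel (μ := μ) hk
  refine condDistrib_ae_eq_of_measure_eq_compProd _ hL.aemeasurable ?_
  calc P.map (fun ω => (Z ω, L ω))
      = (ν.prod μ).withDensity k := hZL
    _ = (ν.prod μ).withDensity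
          ((marginalDensity μ k ∘ Prod.fst) * fun z => k z / marginalDensity μ k z.1) :=
        withDensity_congr_ae (ae_marginalDensity_mul_div_cancel hL hk hZL).symm
    _ = ((ν.withDensity (marginalDensity μ k)).prod μ).withDensity
          fun z => k z / marginalDensity μ k z.1 := by
        rw [withDensity_mul _ (hD.comp measurable_fst) hkD, prod_withDensity_left hD]
        rfl
    _ = P.map Z ⊗ₘ posteriorKernel μ k := by
        rw [← map_eq_withDensity_marginalDensity hL hk hZL, ← Measure.compProd_const]
        rw [posteriorKernel] at h_finite ⊢
        rw [Measure.compProd_withDensity (f := fun z l => k (z, l) / marginalDensity μ k z) hkD]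

variable {k : E × S → ℝ}

lemma toReal_marginalDensity_ofReal (hk : Measurable k) (hk_nonneg : ∀ z, 0 ≤ k z) (z : E) :
    (marginalDensity μ (fun x => ENNReal.ofReal (k x)) z).toReal = ∫ l, k (z, l) ∂μ := by
  have hkz : Measurable fun l => k (z, l) := hk.comp measurable_prodMk_left
  rw [integral_eq_lintegral_of_nonneg_ae (ae_of_all _ fun l => hk_nonneg (z, l))
    hkz.aestronglyMeasurable, marginalDensity]

lemma ae_integral_density_pos [IsFiniteMeasure P] [SFinite ν] [SFinite μ] (hZ : Measurable Z)
    (hL : Measurable L) (hk : Measurable k) (hk_nonneg : ∀ z, 0 ≤ k z)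
    (hZL : P.map (fun ω => (Z ω, L ω)) = (ν.prod μ).withDensity fun z => ENNReal.ofReal (k z)) :
    ∀ᵐ ω ∂P, 0 < ∫ l, k (Z ω, l) ∂μ := by
  have h_lt_top := ae_marginalDensity_lt_top hL hk.ennreal_ofReal hZL
  have h_ac : P.map Z ≪ ν :=
    map_eq_withDensity_marginalDensity hL hk.ennreal_ofReal hZL ▸
      withDensity_absolutelyContinuous _ _
  filter_upwards [ae_of_ae_map hZ.aemeasurable
      (ae_marginalDensity_ne_zero hL hk.ennreal_ofReal hZL),
    ae_of_ae_map hZ.aemeasurable (h_ac.ae_le h_lt_top)] with ω h_ne_zero h_lt_top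
  rw [← toReal_marginalDensity_ofReal hk hk_nonneg]
  exact ENNReal.toReal_pos h_ne_zero h_lt_top.ne

lemma integral_posteriorKernel [SFinite μ] (hk : Measurable k) (hk_nonneg : ∀ z, 0 ≤ k z) {z : E}
    (hz : 0 < ∫ l, k (z, l) ∂μ) (f : S → ℝ) :
    ∫ l, f l ∂posteriorKernel μ (fun x => ENNReal.ofReal (k x)) z
      = (∫ l, f l * k (z, l) ∂μ) / ∫ l, k (z, l) ∂μ := by
  rw [← toReal_marginalDensity_ofReal hk hk_nonneg] at hz ⊢
  rw [posteriorKernel_apply hk.ennreal_ofReal, integral_withDensity_eq_integral_toReal_smul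
    (measurable_div_marginalDensity_left hk.ennreal_ofReal z) (ae_of_all _ fun l =>
      ENNReal.div_lt_top ENNReal.ofReal_ne_top (ENNReal.toReal_pos_iff.1 hz).1.ne'),
    ← integral_div]
  refine integral_congr_ae (ae_of_all _ fun l => ?_)
  simp only [ENNReal.toReal_div, ENNReal.toReal_ofReal (hk_nonneg _), smul_eq_mul]
  ring

theorem condExp_ae_eq_bayes [StandardBorelSpace S] [Nonempty S] [IsFiniteMeasure P]
    [SFinite ν] [SFinite μ] (hZ : Measurable Z) (hL : Measurable L) (hk : Measurable k)
    (hk_nonneg : ∀ z, 0 ≤ k z)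
    (hZL : P.map (fun ω => (Z ω, L ω)) = (ν.prod μ).withDensity fun z => ENNReal.ofReal (k z))
    {f : E × S → ℝ} (hf : Measurable f) (hf_int : Integrable (fun ω => f (Z ω, L ω)) P) :
    P[fun ω => f (Z ω, L ω)|mE.comap Z] =ᵐ[P]
      fun ω => (∫ l, f (Z ω, l) * k (Z ω, l) ∂μ) / ∫ l, k (Z ω, l) ∂μ := by
  filter_upwards [condExp_prod_ae_eq_integral_condDistrib hZ hL.aemeasurable
      hf.stronglyMeasurable hf_int,
    ae_of_ae_map hZ.aemeasurable (condDistrib_ae_eq_posteriorKernel hL hk.ennreal_ofReal hZL),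
    ae_integral_density_pos hZ hL hk hk_nonneg hZL] with ω h_condExp h_posterior h_pos
  rw [h_condExp, h_posterior, integral_posteriorKernel hk hk_nonneg h_pos]

end Bayes

section NoisyObservation

variable {Ω E G : Type*} [MeasurableSpace Ω] [MeasurableSpace E] [AddCommGroup G]
  [MeasurableSpace G] [MeasurableAdd₂ G] [MeasurableSub₂ G] {P : Measure Ω} [IsFiniteMeasure P]
  {ν : Measure E} {μ ρ : Measure G} [SFinite ν] [SFinite μ] [SFinite ρ] [ρ.IsAddLeftInvariant]
  {Y : Ω → E} {L e : Ω → G}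

theorem map_prodMk_add_noise_eq_withDensity (hY : Measurable Y) (hL : Measurable L)
    (he : Measurable e) {p : E × G → ℝ≥0∞} {q : G → ℝ≥0∞} (hp : Measurable p) (hq : Measurable q)
    (hYL : P.map (fun ω => (Y ω, L ω)) = (ν.prod μ).withDensity p)
    (he_law : P.map e = ρ.withDensity q) (h_indep : IndepFun (fun ω => (Y ω, L ω)) e P) :
    P.map (fun ω => ((Y ω, L ω + e ω), L ω))
      = ((ν.prod ρ).prod μ).withDensity fun z => p (z.1.1, z.2) * q (z.1.2 - z.2) := by
  have h_joint : P.map (fun ω => ((Y ω, L ω), e ω))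
      = ((ν.prod μ).prod ρ).withDensity fun z => p z.1 * q z.2 := by
    rw [(indepFun_iff_map_prod_eq_prod_map_map (hY.prodMk hL).aemeasurable he.aemeasurable).1
      h_indep, hYL, he_law, prod_withDensity hp hq]
  have h_shear : MeasurePreserving (fun z : (E × G) × G => (z.1, z.1.2 + z.2))
      ((ν.prod μ).prod ρ) ((ν.prod μ).prod ρ) :=
    (MeasurePreserving.id _).skew_product (g := fun (z : E × G) (x : G) => z.2 + x) (by fun_prop)
      (ae_of_all _ fun z => map_add_left_eq_self ρ z.2)
  have h_swap := (measurePreserving_prod_right_comm ν μ ρ).comp h_shear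
  have hk : Measurable fun z : (E × G) × G => p (z.1.1, z.2) * q (z.1.2 - z.2) := by fun_prop
  rw [← map_withDensity_comp_of_measurePreserving h_swap hk]
  simp only [Function.comp_def, add_sub_cancel_left, Prod.mk.eta]
  rw [← h_joint, Measure.map_map (by fun_prop) (by fun_prop)]
  rfl

end NoisyObservation

section JacodDensity

variable {Ω S : Type*} [MeasurableSpace Ω] [MeasurableSpace S] {P : Measure Ω} {μ : Measure S}
  {L : Ω → S}

lemma condExp_indicator_preimage_of_forall_bounded {m : MeasurableSpace Ω} {p : S → Ω → ℝ}
    (h_cond : ∀ f : S → ℝ, Measurable f → (∃ B, ∀ x, |f x| ≤ B) →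
      P[fun ω => f (L ω)|m] =ᵐ[P] fun ω => ∫ x, f x * p x ω ∂μ)
    {C : Set S} (hC : MeasurableSet C) :
    P[(L ⁻¹' C).indicator 1 | m] =ᵐ[P] fun ω => ∫ x in C, p x ω ∂μ := by
  have h_bounded : ∃ B, ∀ x, |C.indicator (1 : S → ℝ) x| ≤ B :=
    ⟨1, fun x => by by_cases hx : x ∈ C <;> simp [hx]⟩
  filter_upwards [h_cond (C.indicator 1) (measurable_one.indicator hC) h_bounded] with ω hω
  rw [← integral_indicator hC]
  refine hω.trans (integral_congr_ae (ae_of_all _ fun x => ?_))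
  by_cases hx : x ∈ C <;> simp [hx]

theorem map_prodMk_eq_withDensity_of_condExp_indicator {E : Type*} [mE : MeasurableSpace E]
    [IsProbabilityMeasure P] [SFinite μ] {Y : Ω → E} (hY : Measurable Y) (hL : Measurable L)
    {p : E × S → ℝ} (hp : Measurable p) (hp_nonneg : ∀ z, 0 ≤ p z)
    (h_cond : ∀ C, MeasurableSet C → P[(L ⁻¹' C).indicator 1 | mE.comap Y] =ᵐ[P]
      fun ω => ∫ l in C, p (Y ω, l) ∂μ) :
    P.map (fun ω => (Y ω, L ω))
      = ((P.map Y).prod μ).withDensity fun z => ENNReal.ofReal (p z) := by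
  have hp_int : ∀ᵐ ω ∂P, Integrable (fun l => p (Y ω, l)) μ := by
    have h_one : P[(L ⁻¹' univ).indicator 1 | mE.comap Y] = fun _ => (1 : ℝ) := by
      rw [preimage_univ, indicator_univ]
      exact condExp_const hY.comap_le 1
    filter_upwards [h_cond univ MeasurableSet.univ] with ω hω
    rw [h_one, Measure.restrict_univ] at hω
    exact Integrable.of_integral_ne_zero (hω ▸ one_ne_zero)
  have h_cond' (C : Set S) (hC : MeasurableSet C) :
      (fun ω => ∫⁻ l in C, ENNReal.ofReal (p (Y ω, l)) ∂μ) =ᵐ[P]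
        fun ω => ENNReal.ofReal ((P[(L ⁻¹' C).indicator 1 | mE.comap Y]) ω) := by
    filter_upwards [h_cond C hC, hp_int] with ω hω hω_int
    rw [hω, ofReal_integral_eq_lintegral_ofReal hω_int.integrableOn
      (ae_of_all _ fun _ => hp_nonneg _)]
  refine Measure.ext_prod fun {A C} hA hC => Eq.symm ?_
  calc ((P.map Y).prod μ).withDensity (fun z => ENNReal.ofReal (p z)) (A ×ˢ C)
      = ∫⁻ ω in Y ⁻¹' A, ∫⁻ l in C, ENNReal.ofReal (p (Y ω, l)) ∂μ ∂P := by
        rw [withDensity_apply _ (hA.prod hC), setLIntegral_prod _ hp.ennreal_ofReal.aemeasurable,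
          setLIntegral_map hA hp.ennreal_ofReal.lintegral_prod_right' hY]
    _ = ∫⁻ ω in Y ⁻¹' A, ENNReal.ofReal ((P[(L ⁻¹' C).indicator 1 | mE.comap Y]) ω) ∂P :=
        lintegral_congr_ae (ae_restrict_of_ae (h_cond' C hC))
    _ = ENNReal.ofReal (∫ ω in Y ⁻¹' A, (P[(L ⁻¹' C).indicator 1 | mE.comap Y]) ω ∂P) := by
        refine (ofReal_integral_eq_lintegral_ofReal integrable_condExp.integrableOn
          (ae_restrict_of_ae (condExp_nonneg (ae_of_all _ ?_)))).symm
        exact indicator_nonneg fun _ _ => zero_le_one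
    _ = ENNReal.ofReal (∫ ω in Y ⁻¹' A, (L ⁻¹' C).indicator 1 ω ∂P) := by
        rw [setIntegral_condExp hY.comap_le ((integrable_const 1).indicator (hL hC))
          ⟨A, hA, rfl⟩]
    _ = P.map (fun ω => (Y ω, L ω)) (A ×ˢ C) := by
        rw [integral_indicator_one (hL hC), ofReal_measureReal, Measure.restrict_apply (hL hC),
          inter_comm, Measure.map_apply (hY.prodMk hL) (hA.prod hC), mk_preimage_prod]

end JacodDensity

section NoisyBayes

variable {Ω E G : Type*} [MeasurableSpace Ω] [mE : MeasurableSpace E] [AddCommGroup G]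
  [mG : MeasurableSpace G] [MeasurableAdd₂ G] [MeasurableSub₂ G] {P : Measure Ω}
  [IsFiniteMeasure P] {ν : Measure E} {μ ρ : Measure G} [SFinite ν] [SFinite μ] [SFinite ρ]
  [ρ.IsAddLeftInvariant] {Y : Ω → E} {L e : Ω → G} {p : E × G → ℝ} {q : G → ℝ}

lemma map_prodMk_add_noise_eq_withDensity_ofReal (hY : Measurable Y) (hL : Measurable L)
    (he : Measurable e) (hp : Measurable p) (hp_nonneg : ∀ z, 0 ≤ p z) (hq : Measurable q)
    (hYL : P.map (fun ω => (Y ω, L ω)) = (ν.prod μ).withDensity fun z => ENNReal.ofReal (p z))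
    (he_law : P.map e = ρ.withDensity fun x => ENNReal.ofReal (q x))
    (h_indep : IndepFun (fun ω => (Y ω, L ω)) e P) :
    P.map (fun ω => ((Y ω, L ω + e ω), L ω)) = ((ν.prod ρ).prod μ).withDensity
      fun z => ENNReal.ofReal (p (z.1.1, z.2) * q (z.1.2 - z.2)) := by
  simp only [ENNReal.ofReal_mul (hp_nonneg _)]
  exact map_prodMk_add_noise_eq_withDensity (p := fun z => ENNReal.ofReal (p z))
    (q := fun x => ENNReal.ofReal (q x)) hY hL he hp.ennreal_ofReal hq.ennreal_ofReal hYL he_law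
    h_indep

theorem ae_integral_mul_noise_density_pos (hY : Measurable Y) (hL : Measurable L)
    (he : Measurable e) (hp : Measurable p) (hp_nonneg : ∀ z, 0 ≤ p z) (hq : Measurable q)
    (hq_nonneg : ∀ x, 0 ≤ q x)
    (hYL : P.map (fun ω => (Y ω, L ω)) = (ν.prod μ).withDensity fun z => ENNReal.ofReal (p z))
    (he_law : P.map e = ρ.withDensity fun x => ENNReal.ofReal (q x))
    (h_indep : IndepFun (fun ω => (Y ω, L ω)) e P) :
    ∀ᵐ ω ∂P, 0 < ∫ l, p (Y ω, l) * q (L ω + e ω - l) ∂μ :=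
  ae_integral_density_pos (Z := fun ω => (Y ω, L ω + e ω))
    (k := fun z => p (z.1.1, z.2) * q (z.1.2 - z.2)) (hY.prodMk (hL.add he)) hL (by fun_prop)
    (fun _ => mul_nonneg (hp_nonneg _) (hq_nonneg _))
    (map_prodMk_add_noise_eq_withDensity_ofReal hY hL he hp hp_nonneg hq hYL he_law h_indep)

theorem condExp_add_noise_ae_eq_bayes [StandardBorelSpace G] (hY : Measurable Y)
    (hL : Measurable L) (he : Measurable e) (hp : Measurable p) (hp_nonneg : ∀ z, 0 ≤ p z)
    (hq : Measurable q) (hq_nonneg : ∀ x, 0 ≤ q x)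
    (hYL : P.map (fun ω => (Y ω, L ω)) = (ν.prod μ).withDensity fun z => ENNReal.ofReal (p z))
    (he_law : P.map e = ρ.withDensity fun x => ENNReal.ofReal (q x))
    (h_indep : IndepFun (fun ω => (Y ω, L ω)) e P)
    {f : E × G → ℝ} (hf : Measurable f) (hf_int : Integrable (fun ω => f (Y ω, L ω)) P) :
    P[fun ω => f (Y ω, L ω)|mE.comap Y ⊔ mG.comap fun ω => L ω + e ω] =ᵐ[P] fun ω =>
      (∫ l, f (Y ω, l) * (p (Y ω, l) * q (L ω + e ω - l)) ∂μ)
        / ∫ l, p (Y ω, l) * q (L ω + e ω - l) ∂μ := by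
  rw [← MeasurableSpace.comap_prodMk]
  exact condExp_ae_eq_bayes (Z := fun ω => (Y ω, L ω + e ω))
    (k := fun z => p (z.1.1, z.2) * q (z.1.2 - z.2))
    (f := fun z => f (z.1.1, z.2)) (hY.prodMk (hL.add he)) hL (by fun_prop)
    (fun _ => mul_nonneg (hp_nonneg _) (hq_nonneg _))
    (map_prodMk_add_noise_eq_withDensity_ofReal hY hL he hp hp_nonneg hq hYL he_law h_indep)
    (by fun_prop) hf_int

end NoisyBayes

section Independence

variable {Ω : Type*} {m₁ m₂ m₃ mΩ : MeasurableSpace Ω} {P : Measure Ω}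

lemma isPiSystem_image2_inter {C D : Set (Set Ω)} (hC : IsPiSystem C) (hD : IsPiSystem D) :
    IsPiSystem (image2 (· ∩ ·) C D) := by
  rintro _ ⟨s, hs, t, ht, rfl⟩ _ ⟨s', hs', t', ht', rfl⟩ hne
  rw [inter_inter_inter_comm] at hne ⊢
  exact mem_image2_of_mem (hC s hs s' hs' hne.left) (hD t ht t' ht' hne.right)

lemma sup_eq_generateFrom_image2_inter (m₁ m₂ : MeasurableSpace Ω) :
    m₁ ⊔ m₂ = MeasurableSpace.generateFrom
      (image2 (· ∩ ·) {s | MeasurableSet[m₁] s} {t | MeasurableSet[m₂] t}) := by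
  refine le_antisymm (sup_le (fun s hs => ?_) fun t ht => ?_)
    (MeasurableSpace.generateFrom_le ?_)
  · exact MeasurableSpace.measurableSet_generateFrom ⟨s, hs, univ, .univ, inter_univ s⟩
  · exact MeasurableSpace.measurableSet_generateFrom ⟨univ, .univ, t, ht, univ_inter t⟩
  · rintro _ ⟨s, hs, t, ht, rfl⟩
    have hs' : MeasurableSet[m₁ ⊔ m₂] s := le_sup_left (a := m₁) s hs
    exact hs'.inter (le_sup_right (a := m₁) t ht)

lemma indep_sup_right_of_indep_sup_left [IsZeroOrProbabilityMeasure P] (hm₁ : m₁ ≤ mΩ)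
    (hm₂ : m₂ ≤ mΩ) (hm₃ : m₃ ≤ mΩ) (h₁₂ : Indep m₁ m₂ P) (h₁₂₃ : Indep (m₁ ⊔ m₂) m₃ P) :
    Indep m₁ (m₂ ⊔ m₃) P := by
  refine IndepSets.indep hm₁ (sup_le hm₂ hm₃) (@MeasurableSpace.isPiSystem_measurableSet _ m₁)
    (isPiSystem_image2_inter (@MeasurableSpace.isPiSystem_measurableSet _ m₂)
      (@MeasurableSpace.isPiSystem_measurableSet _ m₃))
    (@MeasurableSpace.generateFrom_measurableSet _ m₁).symm
    (sup_eq_generateFrom_image2_inter m₂ m₃) ?_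
  rw [IndepSets_iff]
  rintro s _ hs ⟨t, ht, u, hu, rfl⟩
  have ht' : MeasurableSet[m₁ ⊔ m₂] t := le_sup_right (a := m₁) t ht
  have hs' : MeasurableSet[m₁ ⊔ m₂] s := le_sup_left (b := m₂) s hs
  rw [Indep_iff] at h₁₂ h₁₂₃
  rw [← inter_assoc, h₁₂₃ _ _ (hs'.inter ht') hu, h₁₂ _ _ hs ht, h₁₂₃ _ _ ht' hu, mul_assoc]

variable {F : Type*} [NormedAddCommGroup F] [NormedSpace ℝ F] {f g : Ω → F}

lemma setIntegral_eq_of_isPiSystem {C : Set (Set Ω)} (hC : IsPiSystem C)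
    (hm₁ : m₁ ≤ mΩ) (hm₁C : m₁ = MeasurableSpace.generateFrom C) (hf : Integrable f P)
    (hg : Integrable g P) (h_univ : ∫ ω, f ω ∂P = ∫ ω, g ω ∂P)
    (h_eq : ∀ s ∈ C, ∫ ω in s, f ω ∂P = ∫ ω in s, g ω ∂P) {s : Set Ω}
    (hs : MeasurableSet[m₁] s) : ∫ ω in s, f ω ∂P = ∫ ω in s, g ω ∂P := by
  induction s, hs using MeasurableSpace.induction_on_inter hm₁C hC with
  | empty => simp only [Measure.restrict_empty, integral_zero_measure]
  | basic s hs => exact h_eq s hs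
  | compl s hs ih =>
    rw [setIntegral_compl (hm₁ s hs) hf, setIntegral_compl (hm₁ s hs) hg, h_univ, ih]
  | iUnion s hd hs ih =>
    rw [integral_iUnion (fun i => hm₁ _ (hs i)) hd hf.integrableOn,
      integral_iUnion (fun i => hm₁ _ (hs i)) hd hg.integrableOn]
    exact tsum_congr ih

variable [CompleteSpace F]

lemma setIntegral_inter_of_indep [IsFiniteMeasure P] (hm₁ : m₁ ≤ mΩ) (hm₂ : m₂ ≤ mΩ)
    (h_indep : Indep m₁ m₂ P) (hg : StronglyMeasurable[m₁] g) (hg_int : Integrable g P)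
    {s t : Set Ω} (hs : MeasurableSet[m₁] s) (ht : MeasurableSet[m₂] t) :
    ∫ ω in s ∩ t, g ω ∂P = P.real t • ∫ ω in s, g ω ∂P := by
  calc ∫ ω in s ∩ t, g ω ∂P
      = ∫ ω in t, s.indicator g ω ∂P := by
        rw [setIntegral_indicator (hm₁ s hs), inter_comm]
    _ = ∫ ω in t, (P[s.indicator g|m₂]) ω ∂P :=
        (setIntegral_condExp hm₂ (hg_int.indicator (hm₁ s hs)) ht).symm
    _ = ∫ _ in t, ∫ ω, s.indicator g ω ∂P ∂P :=
        integral_congr_ae (ae_restrict_of_ae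
          (condExp_indep_eq hm₁ hm₂ (hg.indicator hs) h_indep))
    _ = P.real t • ∫ ω in s, g ω ∂P := by
        rw [setIntegral_const, integral_indicator (hm₁ s hs)]

theorem condExp_sup_ae_eq_of_indep [IsFiniteMeasure P] (hm₁₂ : m₁ ≤ m₂) (hm₂ : m₂ ≤ mΩ)
    (hm₃ : m₃ ≤ mΩ) (h_indep : Indep m₂ m₃ P) (hf : StronglyMeasurable[m₂] f)
    (hf_int : Integrable f P) : P[f|m₁ ⊔ m₃] =ᵐ[P] P[f|m₁] := by
  have hm₁ : m₁ ≤ mΩ := hm₁₂.trans hm₂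
  have h_condExp : StronglyMeasurable[m₁] (P[f|m₁]) := stronglyMeasurable_condExp
  have h_condExp_sup : StronglyMeasurable[m₁ ⊔ m₃] (P[f|m₁]) := h_condExp.mono le_sup_left
  refine (ae_eq_condExp_of_forall_setIntegral_eq (sup_le hm₁ hm₃) hf_int
    (fun _ _ _ => integrable_condExp.integrableOn) (fun s hs _ => ?_)
    h_condExp_sup.aestronglyMeasurable).symm
  refine setIntegral_eq_of_isPiSystem
    (isPiSystem_image2_inter (@MeasurableSpace.isPiSystem_measurableSet _ m₁)
      (@MeasurableSpace.isPiSystem_measurableSet _ m₃)) (sup_le hm₁ hm₃)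
    (sup_eq_generateFrom_image2_inter m₁ m₃) integrable_condExp hf_int
    (integral_condExp hm₁) ?_ hs
  rintro _ ⟨t, ht, u, hu, rfl⟩
  rw [setIntegral_inter_of_indep hm₂ hm₃ h_indep (h_condExp.mono hm₁₂) integrable_condExp
      (hm₁₂ t ht) hu, setIntegral_condExp hm₁ hf_int ht,
    setIntegral_inter_of_indep hm₂ hm₃ h_indep hf hf_int (hm₁₂ t ht) hu]

lemma indepFun_prodMk_iff_indep_sup {E S G : Type*} [mE : MeasurableSpace E]
    [mS : MeasurableSpace S] [mG : MeasurableSpace G] {Y : Ω → E} {L : Ω → S} {e : Ω → G} :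
    IndepFun (fun ω => (Y ω, L ω)) e P ↔ Indep (mE.comap Y ⊔ mS.comap L) (mG.comap e) P := by
  rw [IndepFun_iff_Indep, ← MeasurableSpace.comap_prodMk]
  rfl

end Independence

section RunningInfimum

variable {Ω : Type*} [mΩ : MeasurableSpace Ω] {X : ℝ≥0 → Ω → ℝ} {t : ℝ≥0}

lemma measurable_runInf (hX : ∀ s ≤ t, Measurable (X s))
    (hX_cont : ∀ ω, ContinuousOn (fun s => X s ω) (Icc 0 t)) :
    Measurable (runInf X t) := by
  obtain ⟨D, hD_countable, hD⟩ := TopologicalSpace.exists_countable_dense (Icc 0 t)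
  have h_runInf : runInf X t = fun ω => ⨅ s : D, X s ω :=
    funext fun ω => (hD.ciInf' (hX_cont ω).domRestrict).symm
  have := hD_countable.to_subtype
  rw [h_runInf]
  exact .iInf fun s => hX s s.1.2.2

lemma measurable_ite_lt_runInf (hX : ∀ s ≤ t, Measurable (X s))
    (hX_cont : ∀ ω, ContinuousOn (fun s => X s ω) (Icc 0 t)) :
    Measurable fun z : Ω × ℝ => if z.2 < runInf X t z.1 then (1 : ℝ) else 0 :=
  .ite (measurableSet_lt measurable_snd ((measurable_runInf hX hX_cont).comp measurable_fst))
    measurable_const measurable_const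

end RunningInfimum

section InsiderFiltration

variable {Ω : Type*} {m : MeasurableSpace Ω} {ε : ℝ≥0 → Ω → ℝ} {t : ℝ≥0}

/-- The σ-algebra `σ(ε_s − ε_t : s ≤ t)` of the past increments of the noise, seen from time `t`:
the part of the insider's information that turns out to be irrelevant. -/
abbrev backwardIncrementSigma (ε : ℝ≥0 → Ω → ℝ) (t : ℝ≥0) : MeasurableSpace Ω :=
  ⨆ s ∈ Iic t, MeasurableSpace.comap (fun ω => ε s ω - ε t ω) inferInstance

lemma backwardIncrementSigma_le (hε : ∀ s ≤ t, Measurable[m] (ε s)) :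
    backwardIncrementSigma ε t ≤ m :=
  iSup₂_le fun s hs => Measurable.comap_le ((hε s hs).sub (hε t le_rfl))

variable [m0 : MeasurableSpace Ω] {P : Measure Ω} {F : Filtration ℝ≥0 m0} {L : Ω → ℝ}

lemma insiderSigma_eq_sup_backwardIncrementSigma :
    insiderSigma F L ε t = (F t ⊔ MeasurableSpace.comap (fun ω => L ω + ε t ω) inferInstance)
      ⊔ backwardIncrementSigma ε t := by
  have h_barrier {s : ℝ≥0} (hs : s ≤ t) :
      Measurable[insiderSigma F L ε t] fun ω => L ω + ε s ω :=
    measurable_iff_comap_le.2 (le_sup_of_le_right (le_iSup₂_of_le s hs le_rfl))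
  refine le_antisymm (sup_le (le_sup_left.trans le_sup_left) (iSup₂_le fun s hs => ?_))
    (sup_le (sup_le le_sup_left (h_barrier le_rfl).comap_le) (iSup₂_le fun s hs => ?_))
  · have h_add : (fun ω => L ω + ε s ω) = fun ω => (L ω + ε t ω) + (ε s ω - ε t ω) := by
      ext; ring
    rw [h_add]
    exact Measurable.comap_le (.add
      (measurable_iff_comap_le.2 (le_sup_right.trans le_sup_left))
      (measurable_iff_comap_le.2 (le_sup_of_le_right (le_iSup₂_of_le s hs le_rfl))))
  · have h_sub : (fun ω => ε s ω - ε t ω) = fun ω => (L ω + ε s ω) - (L ω + ε t ω) := by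
      ext; ring
    rw [h_sub]
    exact ((h_barrier hs).sub (h_barrier le_rfl)).comap_le

lemma indep_sup_backwardIncrementSigma [IsZeroOrProbabilityMeasure P]
    (hm : m ≤ m0) (hε : ∀ s, Measurable (ε s))
    (hε_indep : Indep (⨆ s ∈ Iic t, MeasurableSpace.comap (ε s) inferInstance) m P)
    (hε_back : Indep (backwardIncrementSigma ε t) (MeasurableSpace.comap (ε t) inferInstance) P) :
    Indep (m ⊔ MeasurableSpace.comap (ε t) inferInstance) (backwardIncrementSigma ε t) P := by
  have h_past (s : ℝ≥0) (hs : s ≤ t) :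
      Measurable[⨆ s ∈ Iic t, MeasurableSpace.comap (ε s) inferInstance] (ε s) :=
    measurable_iff_comap_le.2 (le_iSup₂_of_le s hs le_rfl)
  rw [sup_comm]
  refine (indep_sup_right_of_indep_sup_left (backwardIncrementSigma_le fun s _ => hε s)
    (hε t).comap_le hm hε_back (indep_of_indep_of_le_left hε_indep ?_)).symm
  exact sup_le (backwardIncrementSigma_le h_past) (h_past t le_rfl).comap_le

theorem condExp_insiderSigma_ae_eq [IsZeroOrProbabilityMeasure P] (hL : Measurable L)
    (hε : ∀ s, Measurable (ε s))
    (hε_indep : Indep (⨆ s ∈ Iic t, MeasurableSpace.comap (ε s) inferInstance)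
      (F t ⊔ MeasurableSpace.comap L inferInstance) P)
    (hε_back : Indep (backwardIncrementSigma ε t) (MeasurableSpace.comap (ε t) inferInstance) P)
    {f : Ω → ℝ} (hf : StronglyMeasurable[F t ⊔ MeasurableSpace.comap L inferInstance] f)
    (hf_int : Integrable f P) :
    P[f|insiderSigma F L ε t] =ᵐ[P]
      P[f|F t ⊔ MeasurableSpace.comap (fun ω => L ω + ε t ω) inferInstance] := by
  have h_le : F t ⊔ MeasurableSpace.comap L inferInstance ≤ m0 := sup_le (F.le t) hL.comap_le
  rw [insiderSigma_eq_sup_backwardIncrementSigma]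
  refine condExp_sup_ae_eq_of_indep (sup_le (le_sup_left.trans le_sup_left) ?_)
    (sup_le h_le (hε t).comap_le) (backwardIncrementSigma_le fun s _ => hε s)
    (indep_sup_backwardIncrementSigma h_le hε hε_indep hε_back) (hf.mono le_sup_left) hf_int
  exact Measurable.comap_le (.add
    (measurable_iff_comap_le.2 (le_sup_right.trans le_sup_left))
    (measurable_iff_comap_le.2 le_sup_right))

end InsiderFiltration

theorem ae_pos_and_condExp_insiderSigma_ae_eq_bayes
    {Ω : Type*} [m0 : MeasurableSpace Ω] {P : Measure Ω} [IsProbabilityMeasure P]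
    {F : Filtration ℝ≥0 m0} {L : Ω → ℝ} (hL : Measurable L) {t : ℝ≥0}
    {p : ℝ → Ω → ℝ} (hp_nonneg : ∀ x ω, 0 ≤ p x ω)
    (hp_meas : Measurable[(F t).prod inferInstance] fun z : Ω × ℝ => p z.2 z.1)
    (hp_density : ∀ C, MeasurableSet C → P[(L ⁻¹' C).indicator 1 | F t] =ᵐ[P]
      fun ω => ∫ x in C, p x ω ∂(P.map L))
    {ε : ℝ≥0 → Ω → ℝ} (hε : ∀ s, Measurable (ε s))
    (hε_indep : Indep (⨆ s ∈ Iic t, MeasurableSpace.comap (ε s) inferInstance)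
      (F t ⊔ MeasurableSpace.comap L inferInstance) P)
    (hε_back : Indep (backwardIncrementSigma ε t) (MeasurableSpace.comap (ε t) inferInstance) P)
    {q : ℝ → ℝ} (hq_meas : Measurable q) (hq_nonneg : ∀ x, 0 ≤ q x)
    (hq_density : P.map (ε t) = volume.withDensity fun x => ENNReal.ofReal (q x))
    {f : Ω × ℝ → ℝ} (hf : Measurable[(F t).prod inferInstance] f)
    (hf_int : Integrable (fun ω => f (ω, L ω)) P) :
    (∀ᵐ ω ∂P, 0 < ∫ l, p l ω * q (L ω + ε t ω - l) ∂(P.map L)) ∧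
    P[fun ω => f (ω, L ω)|insiderSigma F L ε t] =ᵐ[P] fun ω =>
      (∫ l, f (ω, l) * (p l ω * q (L ω + ε t ω - l)) ∂(P.map L))
        / ∫ l, p l ω * q (L ω + ε t ω - l) ∂(P.map L) := by
  have h_id : @Measurable Ω Ω m0 (F t) id := measurable_id'' (F.le t)
  have h_comap_id : (F t).comap id = F t := MeasurableSpace.comap_id
  have h_law := map_prodMk_eq_withDensity_of_condExp_indicator (mE := F t) h_id hL hp_meas
    (fun z => hp_nonneg z.2 z.1) (by rwa [h_comap_id])
  have h_indep := (indepFun_prodMk_iff_indep_sup (mE := F t) (Y := id) (L := L) (e := ε t)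
    (P := P)).2 (by
      rw [h_comap_id]
      exact (indep_of_indep_of_le_left hε_indep (le_iSup₂_of_le t self_mem_Iic le_rfl)).symm)
  refine ⟨ae_integral_mul_noise_density_pos (mE := F t) (p := fun z => p z.2 z.1) h_id hL (hε t)
    hp_meas (fun z => hp_nonneg z.2 z.1) hq_meas hq_nonneg h_law hq_density h_indep, ?_⟩
  have h_bayes := condExp_add_noise_ae_eq_bayes (mE := F t) (p := fun z => p z.2 z.1) h_id hL
    (hε t) hp_meas (fun z => hp_nonneg z.2 z.1) hq_meas hq_nonneg h_law hq_density h_indep hf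
    hf_int
  rw [h_comap_id] at h_bayes
  have h_pair : Measurable[F t ⊔ MeasurableSpace.comap L inferInstance, (F t).prod inferInstance]
      fun ω => (ω, L ω) := by
    rw [measurable_iff_comap_le]
    exact (MeasurableSpace.comap_prodMk id L).trans_le (by rw [h_comap_id])
  exact (condExp_insiderSigma_ae_eq hL hε hε_indep hε_back (hf.comp h_pair).stronglyMeasurable
    hf_int).trans h_bayes

theorem insider_azema_supermartingale_general
    {Ω : Type*} [m0 : MeasurableSpace Ω] {P : Measure Ω} [IsProbabilityMeasure P]
    (F : Filtration ℝ≥0 m0) (X : ℝ≥0 → Ω → ℝ) (hX_adapted : Adapted F X) (t : ℝ≥0)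
    (hX_cont : ∀ ω, ContinuousOn (fun s => X s ω) (Icc 0 t))
    (L : Ω → ℝ) (hL : Measurable L)
    (τ : Ω → WithTop ℝ≥0) (hτ : ∀ ω, t < τ ω ↔ L ω < runInf X t ω)
    (p : ℝ → Ω → ℝ) (hp_nonneg : ∀ x ω, 0 ≤ p x ω)
    (hp_meas : Measurable[(F t).prod inferInstance] fun z : Ω × ℝ => p z.2 z.1)
    (hp_density : ∀ f : ℝ → ℝ, Measurable f → (∃ C, ∀ x, |f x| ≤ C) →
      P[fun ω => f (L ω)|F t] =ᵐ[P] fun ω => ∫ x, f x * p x ω ∂(P.map L))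
    (ε : ℝ≥0 → Ω → ℝ) (hε : ∀ s, Measurable (ε s))
    (hε_indep : Indep (⨆ s ∈ Iic t, MeasurableSpace.comap (ε s) inferInstance)
      (F t ⊔ MeasurableSpace.comap L inferInstance) P)
    (hε_back : Indep (backwardIncrementSigma ε t) (MeasurableSpace.comap (ε t) inferInstance) P)
    (q : ℝ → ℝ) (hq_meas : Measurable q) (hq_nonneg : ∀ x, 0 ≤ q x)
    (hq_density : P.map (ε t) = volume.withDensity fun x => ENNReal.ofReal (q x)) :
    (∀ᵐ ω ∂P, 0 < ∫ l, p l ω * q (L ω + ε t ω - l) ∂(P.map L)) ∧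
    (P[fun ω => if t < τ ω then (1 : ℝ) else 0|insiderSigma F L ε t]) =ᵐ[P]
      fun ω =>
        (∫ l, (if l < runInf X t ω then (1 : ℝ) else 0) * p l ω * q (L ω + ε t ω - l)
          ∂(P.map L))
        / (∫ l, p l ω * q (L ω + ε t ω - l) ∂(P.map L)) := by
  have hf := measurable_ite_lt_runInf (mΩ := F t)
    (fun s hs => (hX_adapted s).mono (F.mono hs) le_rfl) hX_cont
  have hf_int : Integrable (fun ω => if L ω < runInf X t ω then (1 : ℝ) else 0) P := by
    have h_meas := (measurable_ite_lt_runInf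
      (fun s _ => (hX_adapted s).mono (F.le s) le_rfl) hX_cont).comp (measurable_id.prodMk hL)
    exact .of_bound h_meas.aestronglyMeasurable 1
      (ae_of_all _ fun ω => by split_ifs <;> norm_num)
  simp only [hτ, mul_assoc]
  exact ae_pos_and_condExp_insiderSigma_ae_eq_bayes hL hp_nonneg hp_meas
    (fun C hC => condExp_indicator_preimage_of_forall_bounded hp_density hC) hε hε_indep hε_back
    hq_meas hq_nonneg hq_density hf hf_int

/-- **Consequence of Proposition 5.1: the insider's Azéma supermartingale.** Under Jacod's
density hypothesis and the noisy-barrier setup, `P`-a.s.,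
`E_P[1_{τ > t} | F^I_t] = S^I_t(L_t)` where
`S^I_t(x) = (∫ 1_{X*_t > l} p_t(l) q_t(x − l) P^L(dl)) / (∫ p_t(l) q_t(x − l) P^L(dl))`,
the denominator at `x = L_t` being a.s. positive. -/
theorem insider_azema_supermartingale
    {Ω : Type*} [m0 : MeasurableSpace Ω] {P : Measure Ω} [IsProbabilityMeasure P]
    (F : Filtration ℝ≥0 m0)
    (X : ℝ≥0 → Ω → ℝ) (hX_adapted : Adapted F X)
    (hX_cont : ∀ ω, Continuous fun s => X s ω)
    (L : Ω → ℝ) (hL : Measurable L)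
    (hX0 : ∀ᵐ ω ∂P, L ω < X 0 ω)
    (τ : Ω → ℝ≥0)
    (hτ : ∀ (θ : ℝ≥0) (ω : Ω), θ < τ ω ↔ L ω < runInf X θ ω)
    -- Jacod's density hypothesis
    (p : ℝ≥0 → ℝ → Ω → ℝ)
    (hp_nonneg : ∀ t x ω, 0 ≤ p t x ω)
    (hp_meas : ∀ t, Measurable[(F t).prod inferInstance] fun q : Ω × ℝ => p t q.2 q.1)
    (hp_pos : ∀ t, ∀ᵐ ω ∂P, 0 < p t (L ω) ω)
    (hp_density : ∀ (t : ℝ≥0) (f : ℝ → ℝ), Measurable f → (∃ C, ∀ x, |f x| ≤ C) →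
      (P[fun ω => f (L ω)|F t]) =ᵐ[P] fun ω => ∫ x, f x * p t x ω ∂(P.map L))
    -- the noise process: continuous, independent of `F_∞ ∨ σ(L)`, with backwardly
    -- independent increments, whose marginal laws admit Lebesgue densities `q_t`
    (ε : ℝ≥0 → Ω → ℝ) (hε_meas : ∀ s, Measurable (ε s))
    (hε_cont : ∀ ω, Continuous fun s => ε s ω)
    (hε_indep : Indep (⨆ s, MeasurableSpace.comap (ε s) inferInstance)
      ((⨆ s, F s) ⊔ MeasurableSpace.comap L inferInstance) P)
    (hε_back : ∀ t θ : ℝ≥0, t ≤ θ →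
      Indep (⨆ s ∈ Set.Iic t, MeasurableSpace.comap (fun ω => ε s ω - ε t ω) inferInstance)
        (MeasurableSpace.comap (ε θ) inferInstance) P)
    (q : ℝ≥0 → ℝ → ℝ) (hq_meas : ∀ s, Measurable (q s)) (hq_nonneg : ∀ s x, 0 ≤ q s x)
    (hq_density : ∀ s, P.map (ε s) = volume.withDensity fun x => ENNReal.ofReal (q s x))
    (t : ℝ≥0) :
    (∀ᵐ ω ∂P, 0 < ∫ l, p t l ω * q t (L ω + ε t ω - l) ∂(P.map L)) ∧
    (P[fun ω => if t < τ ω then (1 : ℝ) else 0|insiderSigma F L ε t]) =ᵐ[P]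
      fun ω =>
        (∫ l, (if l < runInf X t ω then (1 : ℝ) else 0) * p t l ω * q t (L ω + ε t ω - l)
          ∂(P.map L))
        / (∫ l, p t l ω * q t (L ω + ε t ω - l) ∂(P.map L)) := by
  have h_indep := indep_of_indep_of_le hε_indep (iSup₂_le fun s (_ : s ∈ Iic t) => le_iSup _ s)
    (sup_le_sup_right (le_iSup (fun s => F s) t) _)
  simpa only [WithTop.coe_lt_coe] using insider_azema_supermartingale_general F X hX_adapted t
    (fun ω => (hX_cont ω).continuousOn) L hL (fun ω => τ ω)
    (fun ω => WithTop.coe_lt_coe.trans (hτ t ω)) (p t) (hp_nonneg t) (hp_meas t) (hp_density t)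
    ε hε_meas h_indep (hε_back t t le_rfl) (q t) (hq_meas t) (hq_nonneg t) (hq_density t)
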